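/- Let ϑ > 0 and define the C^∞ function θ(x) = e^{−x^{−ϑ}} for x > 0 and θ(x) = 0 for x ≤ 0. Then for every L > 0, the 2×2 triangular semiclassical system h W' = [[x+i, h^p θ(x)],[0, −(x+i)]] W on [−L,L], p ≥ 1, possesses no coordinate change T with T, T^{-1} uniformly bounded in C¹ as h → 0⁺ that converts it to a diagonal system h Z' = D Z. -/

import Mathlib

open Set

attribute [local instance] Matrix.linftyOpNormedAddCommGroup Matrix.linftyOpNormedRing
  Matrix.linftyOpNormedAlgebra Matrix.linftyOpNormedSpace

/-- A uniformly-bounded-in-`C¹` diagonalizing coordinate change for the semiclassical system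
`h W' = 𝒜(x,h) W` on `[−L,L] × (0,h₀]`: `T, T', T⁻¹, (T⁻¹)'` are bounded uniformly in
`(x,h)`, `D` is diagonal, and `h T' = 𝒜 T − T D`, i.e. `W = T Z` converts the system to the
diagonal system `h Z' = D Z`. -/
def IsUniformC1Diagonalizer (L h₀ : ℝ) (𝒜 : ℝ → ℝ → Matrix (Fin 2) (Fin 2) ℂ) : Prop :=
  ∃ (T T' D : ℝ → ℝ → Matrix (Fin 2) (Fin 2) ℂ) (C : ℝ), 0 < C ∧
    ∀ h ∈ Ioc (0:ℝ) h₀, ∀ x ∈ Icc (-L) L,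
      HasDerivAt (fun y => T y h) (T' x h) x ∧
      (∀ i j : Fin 2, i ≠ j → D x h i j = 0) ∧
      IsUnit (T x h) ∧
      ‖T x h‖ ≤ C ∧ ‖(T x h)⁻¹‖ ≤ C ∧ ‖T' x h‖ ≤ C ∧
      ‖deriv (fun y => (T y h)⁻¹) x‖ ≤ C ∧
      h • T' x h = 𝒜 x h * T x h - T x h * D x h


/-- phase `w(δ) - w(y)` for `w(y) = y² + 2iy`. -/
noncomputable def phaseC (δ y : ℝ) : ℂ := ((δ - y : ℝ) : ℂ) * (((δ + y : ℝ) : ℂ) + 2 * Complex.I)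

lemma phaseC_cont (δ : ℝ) : Continuous (phaseC δ) := by
  unfold phaseC; fun_prop

lemma mul_phaseC_re (δ y : ℝ) (z : ℂ) :
    (z * phaseC δ y).re = (δ - y) * (z.re * (δ + y) - 2 * z.im) := by
  simp [phaseC]; ring

lemma intervalIntegrable_mul_theta (θ : ℝ → ℝ) (hm : Measurable θ) (h0 : ∀ x, 0 ≤ θ x)
    (h1 : ∀ x, θ x ≤ 1) (f : ℝ → ℂ) (hf : Continuous f) (a b : ℝ) :
    IntervalIntegrable (fun y => f y * (θ y : ℂ)) MeasureTheory.volume a b := by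
  have h := hf.intervalIntegrable (μ := MeasureTheory.volume) a b
  refine h.mono_fun ?_ ?_
  · exact (hf.measurable.mul (Complex.measurable_ofReal.comp hm)).aestronglyMeasurable
  · refine Filter.Eventually.of_forall fun y => ?_
    change ‖f y * (θ y : ℂ)‖ ≤ ‖f y‖
    rw [norm_mul, Complex.norm_real, Real.norm_of_nonneg (h0 y)]
    exact mul_le_of_le_one_right (norm_nonneg _) (h1 y)

lemma norm_integral_theta_le (θ : ℝ → ℝ) (h0 : ∀ x, 0 ≤ θ x)
    (h1 : ∀ x, θ x ≤ 1) (f : ℝ → ℂ) (a b : ℝ) (hab : a ≤ b) (M : ℝ)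
    (hM : ∀ y ∈ Icc a b, ‖f y‖ ≤ M) :
    ‖∫ y in a..b, f y * (θ y : ℂ)‖ ≤ M * (b - a) := by
  have := intervalIntegral.norm_integral_le_of_norm_le_const (a := a) (b := b)
    (f := fun y => f y * (θ y : ℂ)) (C := M) ?_
  · rwa [abs_of_nonneg (by linarith)] at this
  · intro y hy
    rw [uIoc_of_le hab] at hy
    rw [norm_mul, Complex.norm_real, Real.norm_of_nonneg (h0 y)]
    exact (mul_le_of_le_one_right (norm_nonneg _) (h1 y)).trans (hM y ⟨hy.1.le, hy.2⟩)

noncomputable def GG (θ : ℝ → ℝ) (δ : ℝ) (z : ℂ) : ℂ :=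
  ∫ y in (0:ℝ)..δ, Complex.exp (z * phaseC δ y) * (θ y : ℂ)

lemma GG_diff (θ : ℝ → ℝ) (hm : Measurable θ) (h0 : ∀ x, 0 ≤ θ x)
    (h1 : ∀ x, θ x ≤ 1) (δ : ℝ) : Differentiable ℂ (GG θ δ) := by
  intro z₀
  have hc := phaseC_cont δ
  have key := intervalIntegral.hasDerivAt_integral_of_dominated_loc_of_deriv_le
    (μ := MeasureTheory.volume) (a := 0) (b := δ)
    (F := fun (z : ℂ) (y : ℝ) => Complex.exp (z * phaseC δ y) * (θ y : ℂ))
    (F' := fun (z : ℂ) (y : ℝ) => (Complex.exp (z * phaseC δ y) * phaseC δ y) * (θ y : ℂ))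
    (x₀ := z₀) (s := Metric.ball z₀ 1)
    (bound := fun y => Real.exp ((‖z₀‖ + 1) * ‖phaseC δ y‖) * ‖phaseC δ y‖)
    (Metric.ball_mem_nhds _ one_pos) ?_ ?_ ?_ ?_ ?_ ?_
  · exact key.2.differentiableAt
  · refine Filter.Eventually.of_forall fun z => ?_
    exact ((by fun_prop : Continuous fun y => Complex.exp (z * phaseC δ y)).measurable.mul
      (Complex.measurable_ofReal.comp hm)).aestronglyMeasurable
  · exact intervalIntegrable_mul_theta θ hm h0 h1 _ (by fun_prop) _ _
  · exact ((by fun_prop : Continuous fun y => Complex.exp (z₀ * phaseC δ y) *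
      phaseC δ y).measurable.mul (Complex.measurable_ofReal.comp hm)).aestronglyMeasurable
  · refine Filter.Eventually.of_forall fun y _ z hz => ?_
    rw [norm_mul, Complex.norm_real, Real.norm_of_nonneg (h0 y)]
    refine (mul_le_of_le_one_right (norm_nonneg _) (h1 y)).trans ?_
    rw [norm_mul, Complex.norm_exp]
    gcongr
    refine (Complex.re_le_norm _).trans ?_
    rw [norm_mul]
    gcongr
    have : ‖z - z₀‖ < 1 := by simpa [dist_eq_norm] using hz
    have := norm_le_norm_add_norm_sub' z z₀
    linarith
  · exact Continuous.intervalIntegrable (by fun_prop) _ _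
  · refine Filter.Eventually.of_forall fun y _ z hz => ?_
    have := (((hasDerivAt_id z).mul_const (phaseC δ y)).cexp).mul_const (θ y : ℂ)
    simpa using this

lemma GG_growth (θ : ℝ → ℝ) (h0 : ∀ x, 0 ≤ θ x)
    (h1 : ∀ x, θ x ≤ 1) (δ : ℝ) (hδ : 0 < δ) (z : ℂ) :
    ‖GG θ δ z‖ ≤ Real.exp ((δ * (2 * δ + 2)) * ‖z‖) * δ := by
  have := norm_integral_theta_le θ h0 h1 (fun y => Complex.exp (z * phaseC δ y)) 0 δ hδ.le
    (Real.exp ((δ * (2 * δ + 2)) * ‖z‖)) ?_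
  · simpa [GG] using this
  · intro y hy
    rw [Complex.norm_exp, Real.exp_le_exp]
    refine (Complex.re_le_norm _).trans ?_
    rw [norm_mul, mul_comm]
    gcongr
    rw [phaseC, norm_mul, Complex.norm_real, Real.norm_of_nonneg (by linarith [hy.2])]
    have h3 : ‖((δ + y : ℝ) : ℂ) + 2 * Complex.I‖ ≤ 2 * δ + 2 := by
      refine (norm_add_le _ _).trans ?_
      rw [Complex.norm_real, Real.norm_of_nonneg (by linarith [hy.1])]
      simp
      linarith [hy.2]
    have := hy.1
    have := hy.2
    gcongr
    linarith

lemma GG_direct (θ : ℝ → ℝ) (h0 : ∀ x, 0 ≤ θ x)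
    (h1 : ∀ x, θ x ≤ 1) (δ : ℝ) (hδ : 0 < δ) (z : ℂ) (hz1 : z.re * δ ≤ 2 * z.im)
    (hz2 : z.re * δ ≤ z.im) : ‖GG θ δ z‖ ≤ δ := by
  have := norm_integral_theta_le θ h0 h1 (fun y => Complex.exp (z * phaseC δ y)) 0 δ hδ.le 1 ?_
  · simpa [GG] using this
  · intro y hy
    rw [Complex.norm_exp, Real.exp_le_one_iff, mul_phaseC_re]
    have h2 : 0 ≤ δ - y := by linarith [hy.2]
    refine mul_nonpos_of_nonneg_of_nonpos h2 ?_
    have : δ * (z.re * (δ + y) - 2 * z.im)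
      = (δ - y) * (z.re * δ - 2 * z.im) + y * (2 * (z.re * δ - z.im)) := by ring
    by_contra hcon
    push Not at hcon
    have := mul_pos hδ hcon
    nlinarith [mul_nonneg h2 (sub_nonneg.2 hz1), mul_nonneg hy.1 (sub_nonneg.2 hz2)]

/-- sector Phragmen-Lindelof for opening less than `π`. -/
lemma sector_bound (f : ℂ → ℂ) (hf : Differentiable ℂ f) (A B M a b : ℝ) (hab : a < b)
    (hba : b - a < Real.pi) (hg : ∀ z, ‖f z‖ ≤ Real.exp (B * ‖z‖) * A) (hB : 0 ≤ B)
    (ha : ∀ t : ℝ, 0 < t → ‖f (t * Complex.exp (a * Complex.I))‖ ≤ M)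
    (hb : ∀ t : ℝ, 0 < t → ‖f (t * Complex.exp (b * Complex.I))‖ ≤ M)
    (z : ℂ) (hz : z ≠ 0) (hza : a ≤ z.arg) (hzb : z.arg ≤ b) : ‖f z‖ ≤ M := by
  have hA : 0 ≤ A := by
    have := (norm_nonneg _).trans (hg 0)
    simpa using this
  have hexp : ∀ w : ℂ, Complex.exp w = (Real.exp w.re : ℝ) * Complex.exp (w.im * Complex.I) := by
    intro w
    rw [Complex.ofReal_exp, ← Complex.exp_add, Complex.re_add_im]
  have := PhragmenLindelof.horizontal_strip (f := fun w => f (Complex.exp w)) (a := a) (b := b)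
    (C := M) (z := Complex.log z) ?_ ?_ ?_ ?_ ?_ ?_
  · simpa [Complex.exp_log hz] using this
  · exact (hf.comp Complex.differentiable_exp).diffContOnCl
  · refine ⟨1, ?_, B, ?_⟩
    · rw [one_lt_div (by linarith)]; exact hba
    · refine Asymptotics.IsBigO.of_bound A (Filter.Eventually.of_forall fun w => ?_)
      refine (hg _).trans ?_
      rw [mul_comm, Real.norm_of_nonneg (Real.exp_pos _).le, Complex.norm_exp]
      gcongr
      rw [one_mul]
      exact le_abs_self _
  · intro w hw
    simp only [hexp w, hw]
    exact ha _ (Real.exp_pos _)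
  · intro w hw
    simp only [hexp w, hw]
    exact hb _ (Real.exp_pos _)
  · rwa [Complex.log_im]
  · rwa [Complex.log_im]

lemma analytic_core (θ : ℝ → ℝ) (hm : Measurable θ) (h0 : ∀ x, 0 ≤ θ x)
    (h1 : ∀ x, θ x ≤ 1) (hpos : ∀ x, 0 < x → 0 < θ x) (δ : ℝ) (hδ : 0 < δ) (M : ℝ)
    (hM : ∀ t : ℝ, 0 < t → ‖GG θ δ t‖ ≤ M) : False := by
  have hd := GG_diff θ hm h0 h1 δ
  have hgr := GG_growth θ h0 h1 δ hδ
  have hdir := GG_direct θ h0 h1 δ hδ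
  set N := max M δ with hN
  have hMN : M ≤ N := le_max_left _ _
  have hδN : δ ≤ N := le_max_right _ _
  have hpi := Real.pi_pos
  set γ := Real.arctan (δ / 2) with hγ
  have hγ0 : 0 < γ := Real.arctan_pos.2 (by positivity)
  have hγ1 : γ < Real.pi / 2 := Real.arctan_lt_pi_div_two _
  have hcγ : 0 < Real.cos γ := Real.cos_arctan_pos _
  have hsγ : Real.sin γ = δ / 2 * Real.cos γ := by
    rw [← Real.tan_arctan (δ / 2), ← hγ, Real.tan_mul_cos hcγ.ne']
  have hbound : ∀ z, ‖GG θ δ z‖ ≤ N := by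
    intro z
    by_cases hz : z = 0
    · subst hz
      exact (hdir 0 (by simp) (by simp)).trans hδN
    have hre : z.re = ‖z‖ * Real.cos z.arg := (Complex.norm_mul_cos_arg z).symm
    have him : z.im = ‖z‖ * Real.sin z.arg := (Complex.norm_mul_sin_arg z).symm
    have hzpos : 0 < ‖z‖ := norm_pos_iff.2 hz
    have hreal : ∀ t : ℝ, 0 < t → ‖GG θ δ (t * Complex.exp ((0:ℝ) * Complex.I))‖ ≤ N := by
      intro t ht
      simpa using (hM t ht).trans hMN
    rcases le_or_gt 0 z.arg with ha | ha
    · rcases le_or_gt z.arg (Real.pi / 2) with hb | hb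
      · refine sector_bound (GG θ δ) hd δ _ N 0 (Real.pi / 2) (by positivity) (by linarith) hgr
          (by positivity) hreal ?_ z hz ha hb
        intro t ht
        refine (hdir _ ?_ ?_).trans hδN <;>
        · simp [Complex.exp_re, Complex.exp_im]
          try positivity
      · have h2 : Real.cos z.arg ≤ 0 :=
          Real.cos_nonpos_of_pi_div_two_le_of_le hb.le (by linarith [Complex.arg_le_pi z])
        have h3 : 0 ≤ Real.sin z.arg :=
          Real.sin_nonneg_of_nonneg_of_le_pi (by linarith) (Complex.arg_le_pi z)
        have h4 : z.re ≤ 0 := by rw [hre]; exact mul_nonpos_of_nonneg_of_nonpos hzpos.le h2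
        have h5 : 0 ≤ z.im := by rw [him]; positivity
        refine (hdir z ?_ ?_).trans hδN <;> nlinarith
    · rcases le_or_gt (-(Real.pi - γ)) z.arg with hb | hb
      · refine sector_bound (GG θ δ) hd δ _ N (-(Real.pi - γ)) 0 (by linarith) (by linarith) hgr
          (by positivity) ?_ hreal z hz hb ha.le
        intro t ht
        have e : Complex.exp (((-(Real.pi - γ) : ℝ) : ℂ) * Complex.I)
            = -((Real.cos γ : ℂ) + (Real.sin γ : ℂ) * Complex.I) := by
          rw [Complex.exp_mul_I, ← Complex.ofReal_cos, ← Complex.ofReal_sin, Real.cos_neg,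
            Real.sin_neg, Real.cos_pi_sub, Real.sin_pi_sub]
          push_cast; ring
        rw [e]
        have e1 : ((t : ℂ) * -((Real.cos γ : ℂ) + (Real.sin γ : ℂ) * Complex.I)).re
            = - (t * Real.cos γ) := by simp [-Complex.ofReal_cos, -Complex.ofReal_sin]
        have e2 : ((t : ℂ) * -((Real.cos γ : ℂ) + (Real.sin γ : ℂ) * Complex.I)).im
            = - (t * (δ / 2 * Real.cos γ)) := by
          rw [← hsγ]
          simp [-Complex.ofReal_cos, -Complex.ofReal_sin]
        have := mul_pos (mul_pos ht hcγ) hδ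
        refine (hdir _ ?_ ?_).trans hδN <;> rw [e1, e2] <;> nlinarith
      · have hl := Complex.neg_pi_lt_arg z
        have h2 : Real.sin (z.arg - γ + Real.pi) ≤ 0 :=
          Real.sin_nonpos_of_nonpos_of_neg_pi_le (by linarith) (by linarith)
        rw [Real.sin_add_pi, Real.sin_sub, hsγ] at h2
        have h3 : Real.cos z.arg * (δ / 2) ≤ Real.sin z.arg := by
          by_contra hcon
          push Not at hcon
          nlinarith [mul_pos hcγ (sub_pos.2 hcon)]
        have h4 : z.re * δ ≤ 2 * z.im := by
          rw [hre, him]; nlinarith [mul_le_mul_of_nonneg_left h3 hzpos.le]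
        have h5 : z.im ≤ 0 := by
          rw [him]
          exact mul_nonpos_of_nonneg_of_nonpos hzpos.le
            (Real.sin_nonpos_of_nonpos_of_neg_pi_le ha.le hl.le)
        exact (hdir z h4 (by linarith)).trans hδN
  have hconst := hd.apply_eq_apply_of_bounded
    ((isBounded_iff_forall_norm_le).2 ⟨N, by rintro _ ⟨z, rfl⟩; exact hbound z⟩) (-1) 0
  have hG0 : GG θ δ 0 = ((∫ y in (0:ℝ)..δ, θ y : ℝ) : ℂ) := by
    simp only [GG, zero_mul, Complex.exp_zero, one_mul]
    exact intervalIntegral.integral_ofReal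
  have hi : IntervalIntegrable θ MeasureTheory.volume 0 δ := by
    refine (intervalIntegrable_const (c := (1:ℝ))).mono_fun hm.aestronglyMeasurable
      (Filter.Eventually.of_forall fun y => ?_)
    simpa [abs_of_nonneg (h0 y)] using h1 y
  have hi2 : IntervalIntegrable (fun y => Real.exp (-(δ ^ 2 - y ^ 2)) * θ y)
      MeasureTheory.volume 0 δ :=
    hi.continuousOn_mul (Continuous.continuousOn (by fun_prop))
  have hG1 : ‖GG θ δ (-1)‖ ≤ ∫ y in (0:ℝ)..δ, Real.exp (-(δ ^ 2 - y ^ 2)) * θ y := by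
    refine intervalIntegral.norm_integral_le_of_norm_le hδ.le
      (Filter.Eventually.of_forall fun y _ => ?_) hi2
    rw [norm_mul, Complex.norm_real, Real.norm_of_nonneg (h0 y), Complex.norm_exp, mul_phaseC_re]
    apply le_of_eq
    congr 2
    simp; ring
  have hlt : 0 < ∫ y in (0:ℝ)..δ, (θ y - Real.exp (-(δ ^ 2 - y ^ 2)) * θ y) := by
    refine intervalIntegral.intervalIntegral_pos_of_pos_on (hi.sub hi2) (fun y hy => ?_) hδ
    have : Real.exp (-(δ ^ 2 - y ^ 2)) < 1 := by
      rw [Real.exp_lt_one_iff]; nlinarith [hy.1, hy.2]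
    nlinarith [hpos y hy.1]
  rw [intervalIntegral.integral_sub hi hi2] at hlt
  rw [hconst, hG0, Complex.norm_real] at hG1
  have := le_abs_self (∫ y in (0:ℝ)..δ, θ y)
  rw [Real.norm_eq_abs] at hG1
  linarith

lemma riccati_contra (θ : ℝ → ℝ) (hm : Measurable θ) (h0 : ∀ x, 0 ≤ θ x)
    (h1 : ∀ x, θ x ≤ 1) (hpos : ∀ x, 0 < x → 0 < θ x) (hneg : ∀ x, x ≤ 0 → θ x = 0)
    (L : ℝ) (hL : 0 < L) (p : ℕ) (K h₂ : ℝ) (hh₂ : 0 < h₂)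
    (H : ∀ h : ℝ, 0 < h → h ≤ h₂ → ∃ r r' : ℝ → ℂ, ∀ x ∈ Icc (-L) L,
      HasDerivAt r (r' x) x ∧ ‖r x‖ ≤ K ∧
      (h : ℂ) * r' x = 2 * ((x : ℂ) + Complex.I) * r x + (h : ℂ) ^ p * (θ x : ℂ)) : False := by
  set δ := L / 2 with hδdef
  have hδ : 0 < δ := by positivity
  have hK : 0 ≤ K := by
    obtain ⟨r, r', h⟩ := H h₂ hh₂ le_rfl
    exact (norm_nonneg _).trans (h 0 ⟨by linarith, hL.le⟩).2.1
  set a := L ^ 2 - δ ^ 2 with ha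
  have hapos : 0 < a := by rw [ha, hδdef]; nlinarith
  refine analytic_core θ hm h0 h1 hpos δ hδ
    (max (Real.exp ((δ * (2 * δ + 2)) * (1 / h₂)) * δ)
      (h₂ * (2 * K) * (p.factorial / a ^ p) + L)) ?_
  intro t ht
  rcases le_or_gt t (1 / h₂) with hth | hth
  · refine le_trans ?_ (le_max_left _ _)
    refine (GG_growth θ h0 h1 δ hδ t).trans ?_
    rw [Complex.norm_real, Real.norm_of_nonneg ht.le]
    gcongr
  · refine le_trans ?_ (le_max_right _ _)
    have htinv : 1 / t ≤ h₂ := by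
      rw [div_le_iff₀ ht]; rw [div_lt_iff₀ hh₂] at hth; linarith
    obtain ⟨r, r', hr⟩ := H (1 / t) (by positivity) htinv
    set e : ℝ → ℂ := fun x => Complex.exp (-(t : ℂ) * ((x : ℂ) ^ 2 + 2 * Complex.I * x)) with he
    have hec : Continuous e := by rw [he]; fun_prop
    have hen : ∀ x, ‖e x‖ = Real.exp (-(t * x ^ 2)) := by
      intro x
      simp only [he, Complex.norm_exp]
      congr 1
      simp [pow_two]
    have htC : (t : ℂ) ≠ 0 := by exact_mod_cast ht.ne'
    have hIntble : ∀ c d, IntervalIntegrable (fun y => e y * (θ y : ℂ)) MeasureTheory.volume c d :=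
      fun c d => intervalIntegrable_mul_theta θ hm h0 h1 e hec c d
    have hder : ∀ x ∈ uIcc (-L) L, HasDerivAt (fun x => (t : ℂ) ^ p * (1 / t) * (e x * r x))
        (e x * (θ x : ℂ)) x := by
      intro x hx
      rw [uIcc_of_le (by linarith)] at hx
      obtain ⟨d1, -, d3⟩ := hr x hx
      have dx : HasDerivAt (fun x : ℝ => (x : ℂ)) 1 x := Complex.ofRealCLM.hasDerivAt
      have de : HasDerivAt e (e x * (-(t : ℂ) * (2 * (x : ℂ) + 2 * Complex.I))) x := by
        have := (((dx.pow 2).add (dx.const_mul (2 * Complex.I))).const_mul (-(t : ℂ))).cexp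
        refine this.congr_deriv ?_
        simp [he]
      have := (de.mul d1).const_mul ((t : ℂ) ^ p * (1 / t))
      refine this.congr_deriv ?_
      have d4 : r' x = t * (2 * ((x : ℂ) + Complex.I) * r x + (1 / (t : ℂ)) ^ p * (θ x : ℂ)) := by
        have := congrArg (fun w => (t : ℂ) * w) d3
        push_cast at this
        rw [← this]; field_simp
      rw [d4]
      have : (1 / (t : ℂ)) ^ p * t ^ p = 1 := by rw [← mul_pow]; field_simp; simp
      have e1 : (t : ℂ) * (1 / t) = 1 := by field_simp
      linear_combination (e x * θ x) * this + (e x * θ x) * ((1 / (t : ℂ)) ^ p * t ^ p) * e1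
    have hFTC := intervalIntegral.integral_eq_sub_of_hasDerivAt hder (hIntble _ _)
    have hneg0 : ∫ y in (-L)..0, e y * (θ y : ℂ) = 0 := by
      rw [intervalIntegral.integral_congr (g := fun _ => (0:ℂ))]
      · simp
      · intro y hy
        rw [uIcc_of_le (by linarith)] at hy
        simp [hneg y hy.2]
    have hs1 := intervalIntegral.integral_add_adjacent_intervals (hIntble (-L) 0) (hIntble 0 δ)
    have hs2 := intervalIntegral.integral_add_adjacent_intervals (hIntble (-L) δ) (hIntble δ L)
    have htail := norm_integral_theta_le θ h0 h1 e δ L (by linarith) (Real.exp (-(t * δ ^ 2))) (by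
      intro y hy
      rw [hen, Real.exp_le_exp]
      have : δ ^ 2 ≤ y ^ 2 := by nlinarith [hy.1]
      nlinarith)
    have hq : ∀ x ∈ Icc (-L) L, x ^ 2 = L ^ 2 →
        ‖(t : ℂ) ^ p * (1 / t) * (e x * r x)‖ ≤ t ^ p * (1 / t) * (Real.exp (-(t * L ^ 2)) * K) := by
      intro x hx hx2
      rw [norm_mul, norm_mul, norm_mul, hen, hx2]
      simp only [norm_pow, norm_div, norm_one, Complex.norm_real, Real.norm_of_nonneg ht.le]
      gcongr
      exact (hr x hx).2.1
    have hqL := hq L ⟨by linarith, le_rfl⟩ rfl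
    have hqL' := hq (-L) ⟨le_rfl, by linarith⟩ (by ring)
    have hmain : ‖∫ y in (0:ℝ)..δ, e y * (θ y : ℂ)‖ ≤
        2 * (t ^ p * (1 / t) * (Real.exp (-(t * L ^ 2)) * K)) + Real.exp (-(t * δ ^ 2)) * (L - δ) := by
      have : ∫ y in (0:ℝ)..δ, e y * (θ y : ℂ) =
        ((t : ℂ) ^ p * (1 / t) * (e L * r L) - (t : ℂ) ^ p * (1 / t) * (e (-L) * r (-L)))
          - ∫ y in δ..L, e y * (θ y : ℂ) := by
        rw [← hFTC, ← hs2, ← hs1, hneg0]; ring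
      rw [this]
      refine (norm_sub_le _ _).trans ?_
      have := norm_sub_le ((t : ℂ) ^ p * (1 / t) * (e L * r L))
        ((t : ℂ) ^ p * (1 / t) * (e (-L) * r (-L)))
      linarith
    have hGG : GG θ δ t = Complex.exp (t * ((δ : ℂ) ^ 2 + 2 * Complex.I * δ)) *
        ∫ y in (0:ℝ)..δ, e y * (θ y : ℂ) := by
      rw [GG, ← intervalIntegral.integral_const_mul]
      congr 1
      funext y
      rw [← mul_assoc, he, ← Complex.exp_add]
      congr 2
      simp only [phaseC]
      push_cast
      ring
    have hnE : ‖Complex.exp (t * ((δ : ℂ) ^ 2 + 2 * Complex.I * δ))‖ = Real.exp (t * δ ^ 2) := by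
      rw [Complex.norm_exp]
      congr 1
      simp [pow_two]
    rw [hGG, norm_mul, hnE]
    have hfac : t ^ p * Real.exp (-(t * a)) ≤ p.factorial / a ^ p := by
      have := Real.pow_div_factorial_le_exp (t * a) (by positivity) p
      rw [div_le_iff₀ (by positivity), mul_pow] at this
      rw [le_div_iff₀ (by positivity), Real.exp_neg]
      have hx := Real.exp_pos (t * a)
      rw [mul_right_comm, ← div_eq_mul_inv, div_le_iff₀ hx]
      linarith
    have e1 : Real.exp (t * δ ^ 2) * Real.exp (-(t * δ ^ 2)) = 1 := by
      rw [← Real.exp_add]; simp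
    have e2 : Real.exp (t * δ ^ 2) * Real.exp (-(t * L ^ 2)) = Real.exp (-(t * a)) := by
      rw [← Real.exp_add, ha]; congr 1; ring
    calc _ ≤ Real.exp (t * δ ^ 2) * (2 * (t ^ p * (1 / t) * (Real.exp (-(t * L ^ 2)) * K))
          + Real.exp (-(t * δ ^ 2)) * (L - δ)) := by gcongr
      _ = (1 / t) * (2 * K) * (t ^ p * Real.exp (-(t * a))) + (L - δ) := by
          rw [← e2]
          linear_combination (L - δ) * e1
      _ ≤ _ := by
          gcongr
          linarith

lemma norm_entry_le (A : Matrix (Fin 2) (Fin 2) ℂ) (i j : Fin 2) : ‖A i j‖ ≤ ‖A‖ := by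
  rw [Matrix.linfty_opNorm_def]
  have h1 : ‖A i j‖₊ ≤ ∑ k, ‖A i k‖₊ :=
    Finset.single_le_sum (f := fun k => ‖A i k‖₊) (fun _ _ => by positivity) (Finset.mem_univ j)
  have h2 := Finset.le_sup (f := fun i => ∑ k, ‖A i k‖₊) (Finset.mem_univ i)
  exact_mod_cast h1.trans h2

lemma hasDerivAt_entry {f : ℝ → Matrix (Fin 2) (Fin 2) ℂ} {f' : Matrix (Fin 2) (Fin 2) ℂ} {x : ℝ}
    (h : HasDerivAt f f' x) (i j : Fin 2) : HasDerivAt (fun y => f y i j) (f' i j) x :=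
  ((Matrix.entryLinearMap ℝ ℂ i j).toContinuousLinearMap.hasFDerivAt).comp_hasDerivAt x h

lemma det_lower (A : Matrix (Fin 2) (Fin 2) ℂ) (C : ℝ) (hC : 0 < C) (hu : IsUnit A)
    (h : ‖A⁻¹‖ ≤ C) : 1 / (2 * C ^ 2) ≤ ‖A 0 0 * A 1 1 - A 0 1 * A 1 0‖ := by
  have h1 : A.det * A⁻¹.det = 1 := by
    rw [← Matrix.det_mul, Matrix.mul_nonsing_inv _ ((Matrix.isUnit_iff_isUnit_det A).1 hu),
      Matrix.det_one]
  have hb : ‖A⁻¹.det‖ ≤ 2 * C ^ 2 := by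
    rw [Matrix.det_fin_two]
    refine (norm_sub_le _ _).trans ?_
    rw [norm_mul, norm_mul]
    have hh := fun i j => (norm_entry_le A⁻¹ i j).trans h
    have a1 := mul_le_mul (hh 0 0) (hh 1 1) (norm_nonneg _) hC.le
    have a2 := mul_le_mul (hh 0 1) (hh 1 0) (norm_nonneg _) hC.le
    linarith
  rw [← Matrix.det_fin_two, div_le_iff₀ (by positivity)]
  have h2 : ‖A.det‖ * ‖A⁻¹.det‖ = 1 := by rw [← norm_mul, h1, norm_one]
  nlinarith [norm_nonneg A.det]

/-- From the diagonalizer at fixed small `h`, extract a bounded solution of the Riccati equation. -/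
lemma extract_riccati (L : ℝ) (hL : 0 < L) (C h : ℝ) (hC : 0 < C) (hh : 0 < h) (hh1 : h ≤ 1)
    (hsmall : 4 * h ^ 2 * C ^ 4 < 2 * (1 / (2 * C ^ 2)) ^ 2 / 9) (p : ℕ) (hp : 1 ≤ p)
    (θ : ℝ → ℝ) (h0 : ∀ x, 0 ≤ θ x) (h1 : ∀ x, θ x ≤ 1)
    (T T' D : ℝ → Matrix (Fin 2) (Fin 2) ℂ)
    (H : ∀ x ∈ Icc (-L) L, HasDerivAt T (T' x) x ∧ (∀ i j : Fin 2, i ≠ j → D x i j = 0) ∧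
      IsUnit (T x) ∧ ‖T x‖ ≤ C ∧ ‖(T x)⁻¹‖ ≤ C ∧ ‖T' x‖ ≤ C ∧
      h • T' x = !![(x : ℂ) + Complex.I, (h : ℂ) ^ p * (θ x : ℂ); 0, -((x : ℂ) + Complex.I)] * T x
        - T x * D x) :
    ∃ r r' : ℝ → ℂ, ∀ x ∈ Icc (-L) L,
      HasDerivAt r (r' x) x ∧ ‖r x‖ ≤ C / (1 / (2 * C ^ 2) / (3 * C)) ∧
      (h : ℂ) * r' x = 2 * ((x : ℂ) + Complex.I) * r x + (h : ℂ) ^ p * (θ x : ℂ) := by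
  set c := 1 / (2 * C ^ 2) with hc
  have hcpos : 0 < c := by positivity
  have hT : ∀ x ∈ Icc (-L) L, ∀ i j, ‖T x i j‖ ≤ C := fun x hx i j =>
    (norm_entry_le _ i j).trans (H x hx).2.2.2.1
  have hT' : ∀ x ∈ Icc (-L) L, ∀ i j, ‖T' x i j‖ ≤ C := fun x hx i j =>
    (norm_entry_le _ i j).trans (H x hx).2.2.2.2.2.1
  have hd : ∀ x ∈ Icc (-L) L, ∀ i j, HasDerivAt (fun y => T y i j) (T' x i j) x :=
    fun x hx i j => hasDerivAt_entry (H x hx).1 i j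
  have hric : ∀ x ∈ Icc (-L) L, ∀ j, (h : ℂ) * (T' x 0 j * T x 1 j - T x 0 j * T' x 1 j)
      = 2 * ((x : ℂ) + Complex.I) * (T x 0 j * T x 1 j)
        + (h : ℂ) ^ p * (θ x : ℂ) * (T x 1 j) ^ 2 := by
    intro x hx j
    obtain ⟨-, hD, -, -, -, -, heq⟩ := H x hx
    have q0 := congrFun (congrFun heq 0) j
    have q1 := congrFun (congrFun heq 1) j
    have hD01 := hD 0 1 (by decide)
    have hD10 := hD 1 0 (by decide)
    fin_cases j
    · simp [Matrix.mul_apply, Matrix.vecMul, dotProduct, Fin.sum_univ_two, hD10] at q0 q1 ⊢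
      linear_combination T x 1 0 * q0 - T x 0 0 * q1
    · simp [Matrix.mul_apply, Matrix.vecMul, dotProduct, Fin.sum_univ_two, hD01] at q0 q1 ⊢
      linear_combination T x 1 1 * q0 - T x 0 1 * q1
  have hprod : ∀ x ∈ Icc (-L) L, ∀ j, ‖T x 0 j * T x 1 j‖ ≤ 2 * h * C ^ 2 := by
    intro x hx j
    have e := hric x hx j
    have hxi : 1 ≤ ‖(x : ℂ) + Complex.I‖ := by
      have := Complex.abs_im_le_norm ((x : ℂ) + Complex.I)
      simpa using this
    have e2 : 2 * ((x : ℂ) + Complex.I) * (T x 0 j * T x 1 j)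
      = (h : ℂ) * (T' x 0 j * T x 1 j - T x 0 j * T' x 1 j)
        - (h : ℂ) ^ p * (θ x : ℂ) * (T x 1 j) ^ 2 := by rw [e]; ring
    have n1 : ‖2 * ((x : ℂ) + Complex.I) * (T x 0 j * T x 1 j)‖
        = 2 * ‖(x : ℂ) + Complex.I‖ * ‖T x 0 j * T x 1 j‖ := by
      rw [norm_mul, norm_mul]; simp
    have n2 : ‖(h : ℂ) * (T' x 0 j * T x 1 j - T x 0 j * T' x 1 j)‖ ≤ h * (C * C + C * C) := by
      rw [norm_mul, Complex.norm_real, Real.norm_of_nonneg hh.le]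
      gcongr
      refine (norm_sub_le _ _).trans ?_
      rw [norm_mul, norm_mul]
      have := hT x hx 0 j
      have := hT x hx 1 j
      have := hT' x hx 0 j
      have := hT' x hx 1 j
      gcongr
    have n3 : ‖(h : ℂ) ^ p * (θ x : ℂ) * (T x 1 j) ^ 2‖ ≤ h * 1 * C ^ 2 := by
      rw [norm_mul, norm_mul, norm_pow, norm_pow, Complex.norm_real, Complex.norm_real,
        Real.norm_of_nonneg hh.le, Real.norm_of_nonneg (h0 x)]
      have := hT x hx 1 j
      have := h1 x
      have := h0 x
      gcongr
      exact pow_le_of_le_one hh.le hh1 (by omega)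
    have n4 := (n1 ▸ e2 ▸ norm_sub_le _ _ :
      2 * ‖(x : ℂ) + Complex.I‖ * ‖T x 0 j * T x 1 j‖ ≤ _)
    have n5 : ‖T x 0 j * T x 1 j‖ ≤ ‖(x : ℂ) + Complex.I‖ * ‖T x 0 j * T x 1 j‖ :=
      le_mul_of_one_le_left (norm_nonneg _) hxi
    have : 0 < h * C ^ 2 := by positivity
    nlinarith
  have hdet : ∀ x ∈ Icc (-L) L, c ≤ ‖T x 0 0 * T x 1 1‖ + ‖T x 0 1 * T x 1 0‖ := fun x hx =>
    (det_lower (T x) C hC (H x hx).2.2.1 (H x hx).2.2.2.2.1).trans (norm_sub_le _ _)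
  have hPQ : ∀ x ∈ Icc (-L) L,
      ‖T x 0 0 * T x 1 1‖ * ‖T x 0 1 * T x 1 0‖ ≤ 4 * h ^ 2 * C ^ 4 := by
    intro x hx
    have a := mul_le_mul (hprod x hx 0) (hprod x hx 1) (norm_nonneg _) (by positivity)
    simp only [norm_mul] at a ⊢
    nlinarith
  have hne : ∀ x ∈ Icc (-L) L, ‖T x 0 0 * T x 1 1‖ ≠ c / 3 := by
    intro x hx he
    have a := hdet x hx
    have b := hPQ x hx
    rw [he] at a b
    nlinarith
  have hcont : ContinuousOn (fun x => ‖T x 0 0 * T x 1 1‖) (Icc (-L) L) := fun x hx =>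
    ((hd x hx 0 0).continuousAt.mul (hd x hx 1 1).continuousAt).norm.continuousWithinAt
  have hfin : ∀ j, (∀ x ∈ Icc (-L) L, c / (3 * C) ≤ ‖T x 1 j‖) →
      ∃ r r' : ℝ → ℂ, ∀ x ∈ Icc (-L) L,
      HasDerivAt r (r' x) x ∧ ‖r x‖ ≤ C / (c / (3 * C)) ∧
      (h : ℂ) * r' x = 2 * ((x : ℂ) + Complex.I) * r x + (h : ℂ) ^ p * (θ x : ℂ) := by
    intro j hj
    refine ⟨fun x => T x 0 j / T x 1 j,
      fun x => (T' x 0 j * T x 1 j - T x 0 j * T' x 1 j) / (T x 1 j) ^ 2, fun x hx => ?_⟩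
    have hpos : 0 < ‖T x 1 j‖ := lt_of_lt_of_le (by positivity) (hj x hx)
    have hn : T x 1 j ≠ 0 := norm_pos_iff.1 hpos
    refine ⟨(hd x hx 0 j).div (hd x hx 1 j) hn, ?_, ?_⟩
    · rw [norm_div]
      have := hT x hx 0 j
      have := hj x hx
      gcongr
    · have := hric x hx j
      rw [← mul_div_assoc, this]
      field_simp
  have hlow : ∀ a b : ℂ, ‖a‖ ≤ C → c / 3 ≤ ‖a * b‖ → c / (3 * C) ≤ ‖b‖ := by
    intro a b ha hab
    rw [norm_mul] at hab
    rw [div_le_iff₀ (by positivity)]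
    nlinarith [mul_le_mul_of_nonneg_right ha (norm_nonneg b)]
  by_cases hcase : ∃ x ∈ Icc (-L) L, ‖T x 0 0 * T x 1 1‖ ≤ c / 3
  · obtain ⟨x₀, hx₀, hle⟩ := hcase
    refine hfin 0 fun x hx => hlow (T x 0 1) _ (hT x hx 0 1) ?_
    have : ‖T x 0 0 * T x 1 1‖ < c / 3 := by
      by_contra hcon
      push Not at hcon
      obtain ⟨y, hy, hye⟩ := isPreconnected_Icc.intermediate_value hx₀ hx hcont ⟨hle, hcon⟩
      exact hne y hy hye
    linarith [hdet x hx]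
  · push Not at hcase
    exact hfin 1 fun x hx => hlow (T x 0 0) _ (hT x hx 0 0) (hcase x hx).le

/-- **Failure of local conjugators for `C^∞` coefficients** (Corollary 1.9).
Let `ϑ > 0` and let `θ(x) = e^{−x^{−ϑ}}` for `x > 0`, `θ(x) = 0` for `x ≤ 0` (a `C^∞` but
non-analytic function).  Then for every `L > 0` and `p ≥ 1` the triangular system
`h W' = [[x+i, h^p θ(x)],[0, −(x+i)]] W` on `[−L,L]` possesses no coordinate change `T`
with `T, T⁻¹` uniformly bounded in `C¹` as `h → 0⁺` converting it to a diagonal system. -/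
theorem failure_of_local_conjugators_for_Cinfty
    (ϑ : ℝ) (hϑ : 0 < ϑ) (L : ℝ) (hL : 0 < L) (p : ℕ) (hp : 1 ≤ p) (h₀ : ℝ) (hh₀ : 0 < h₀) :
    ¬ ∃ h₁ ∈ Ioc (0:ℝ) h₀, IsUniformC1Diagonalizer L h₁
        (fun x h => !![(x : ℂ) + Complex.I,
                       (h : ℂ) ^ p * (if 0 < x then (Real.exp (-(x ^ (-ϑ))) : ℂ) else 0);
                       0, -((x : ℂ) + Complex.I)]) := by
  rintro ⟨h₁, hh₁, T, T', D, C, hC, H⟩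
  set θ : ℝ → ℝ := fun x => if 0 < x then Real.exp (-(x ^ (-ϑ))) else 0 with hθ
  have hm : Measurable θ :=
    Measurable.ite measurableSet_Ioi (by fun_prop) measurable_const
  have h0 : ∀ x, 0 ≤ θ x := by
    intro x; simp only [hθ]; split_ifs <;> positivity
  have h1 : ∀ x, θ x ≤ 1 := by
    intro x; simp only [hθ]; split_ifs with hx
    · rw [Real.exp_le_one_iff]
      have := Real.rpow_nonneg hx.le (-ϑ)
      linarith
    · exact zero_le_one
  have hpos : ∀ x, 0 < x → 0 < θ x := by
    intro x hx; simp only [hθ, if_pos hx]; positivity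
  have hneg : ∀ x, x ≤ 0 → θ x = 0 := by
    intro x hx; simp only [hθ, if_neg (not_lt.2 hx)]
  set c := 1 / (2 * C ^ 2) with hc
  have hcpos : 0 < c := by positivity
  -- threshold: `h ≤ 1`, `h ≤ h₁`, `h ≤ c / (6 C²)`
  set h₂ := min (min 1 h₁) (c / (6 * C ^ 2)) with hh₂
  have hh₂pos : 0 < h₂ := lt_min (lt_min one_pos hh₁.1) (by positivity)
  refine riccati_contra θ hm h0 h1 hpos hneg L hL p (C / (c / (3 * C))) h₂ hh₂pos ?_
  intro h hh hle
  have hle1 : h ≤ 1 := hle.trans ((min_le_left _ _).trans (min_le_left _ _))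
  have hleh : h ≤ h₁ := hle.trans ((min_le_left _ _).trans (min_le_right _ _))
  have hlec : h ≤ c / (6 * C ^ 2) := hle.trans (min_le_right _ _)
  refine extract_riccati L hL C h hC hh hle1 ?_ p hp θ h0 h1 (fun x => T x h) (fun x => T' x h)
    (fun x => D x h) ?_
  · rw [le_div_iff₀ (by positivity)] at hlec
    have : (h * (6 * C ^ 2)) ^ 2 ≤ c ^ 2 := by gcongr
    rw [← hc]
    nlinarith [pow_pos hcpos 2]
  · intro x hx
    obtain ⟨a1, a2, a3, a4, a5, a6, -, a8⟩ := H h ⟨hh, hleh⟩ x hx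
    refine ⟨a1, a2, a3, a4, a5, a6, ?_⟩
    rw [a8]
    simp only [hθ]
    split_ifs <;> simp
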